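/- For every even integer n ≥ 1, the number of 123-avoiding involutions of {1,2,…,n} with exactly two fixed points equals the binomial coefficient C(n-1, n/2); for every odd n ≥ 1 this number is 0. -/

import Mathlib

/-- The number of fixed points of a permutation of `Fin n`. -/
def fixedPts {n : ℕ} (π : Equiv.Perm (Fin n)) : ℕ :=
  (Finset.univ.filter fun i => π i = i).card

/-- A permutation is an involution if it is its own inverse. -/
def IsInvolution {n : ℕ} (π : Equiv.Perm (Fin n)) : Prop :=
  ∀ i, π (π i) = i

/-- A permutation of `Fin n` avoids the pattern 123. -/
def Avoids123 {n : ℕ} (π : Equiv.Perm (Fin n)) : Prop :=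
  ¬ ∃ i₁ i₂ i₃ : Fin n, i₁ < i₂ ∧ i₂ < i₃ ∧ (π i₁ < π i₂ ∧ π i₂ < π i₃)

/-- `i_n^k(123)`: the number of 123-avoiding involutions of `{1, …, n}` with exactly
`k` fixed points. -/
noncomputable def iCount123 (n k : ℕ) : ℕ :=
  Nat.card {π : Equiv.Perm (Fin n) // IsInvolution π ∧ Avoids123 π ∧ fixedPts π = k}

/-!
Let `E` be the set of left-to-right minima of a 123-avoiding involution `π`. Then `π` reverses the
order of both `E` and `Eᶜ`, so `E` determines `π`, and `π` fixes one point in each of these two sets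
that has odd size. Conversely, the involution reversing `E` and `Eᶜ` has left-to-right minima `E`
exactly when each `c ∉ E` has an element of `E` to its lower left. This happens exactly when `c` is
mapped strictly above the antidiagonal, which is a ballot condition on the members of `E` near the
two ends of `Fin n`.

Peeling off both endpoints gives a recursion for the number of ballot subsets, whose solution is
the central binomial coefficient of row `n`. For `n = 2m` the ballot condition does not involve the
element `m`, so toggling it pairs the ballot subsets of odd size with those of even size. Two fixed
points correspond to `E` and `Eᶜ` both being odd, which leaves half of `C(2m, m)`.
-/

section Reversal

open Finset

theorem eqOn_id_of_strictMonoOn {α : Type*} [LinearOrder α] {s : Set α} (hs : s.Finite)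
    {f : α → α} (hf : StrictMonoOn f s) (hm : Set.MapsTo f s s) : Set.EqOn f id s := by
  intro x hx
  have : Finite s := hs
  have hmono : StrictMono (hm.restrict f s s) := fun a b hab => hf a.2 b.2 hab
  exact congrArg Subtype.val (le_antisymm (hmono.apply_le (x := ⟨x, hx⟩)) hmono.le_apply)

theorem card_filter_lt_lt_iff {α : Type*} [LinearOrder α] {S : Finset α} {y : α} (hy : y ∈ S)
    (z : α) : #{x ∈ S | x < y} < #{x ∈ S | x < z} ↔ y < z := by
  constructor
  · contrapose!
    exact fun hzy => card_le_card (monotone_filter_right S fun _ _ hx => hx.trans_le hzy)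
  · refine fun hyz => card_lt_card <|
      (ssubset_iff_of_subset (monotone_filter_right S fun _ _ hx => hx.trans hyz)).2 ?_
    exact ⟨y, mem_filter.2 ⟨hy, hyz⟩, fun hyy => lt_irrefl y (mem_filter.1 hyy).2⟩

theorem card_filter_gt_lt_iff {α : Type*} [LinearOrder α] {S : Finset α} {y : α} (hy : y ∈ S)
    (z : α) : #{x ∈ S | y < x} < #{x ∈ S | z < x} ↔ z < y :=
  card_filter_lt_lt_iff (α := αᵒᵈ) hy z

/-- `f` maps the finite set `S` to itself and reverses its order. -/
structure ReversesOn {α : Type*} [LinearOrder α] (f : α → α) (S : Finset α) : Prop where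
  mapsTo : Set.MapsTo f S S
  strictAntiOn : StrictAntiOn f S

namespace ReversesOn

variable {α : Type*} [LinearOrder α] {f g : α → α} {S : Finset α}

theorem apply_apply (hf : ReversesOn f S) (hg : ReversesOn g S) {x : α} (hx : x ∈ S) :
    g (f x) = x :=
  eqOn_id_of_strictMonoOn S.finite_toSet (hg.strictAntiOn.comp hf.strictAntiOn hf.mapsTo)
    (hg.mapsTo.comp hf.mapsTo) hx

theorem eqOn (hf : ReversesOn f S) (hg : ReversesOn g S) : Set.EqOn f g S := fun _ hx =>
  (hg.apply_apply hg (hf.mapsTo hx)).symm.trans (congrArg g (hf.apply_apply hg hx))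

theorem card_filter_lt (h : ReversesOn f S) {x : α} (hx : x ∈ S) :
    #{y ∈ S | y < x} = #{y ∈ S | f x < y} := by
  have hinv (y) (hy : y ∈ S) : f (f y) = y := h.apply_apply h hy
  refine card_nbij' f f (fun y hy => ?_) (fun y hy => ?_)
    (fun y hy => hinv y (mem_filter.1 hy).1) (fun y hy => hinv y (mem_filter.1 hy).1)
  · obtain ⟨hyS, hyx⟩ := mem_filter.1 hy
    exact mem_filter.2 ⟨h.mapsTo hyS, h.strictAntiOn hyS hx hyx⟩
  · obtain ⟨hyS, hxy⟩ := mem_filter.1 hy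
    refine mem_filter.2 ⟨h.mapsTo hyS, ?_⟩
    simpa only [hinv x hx] using h.strictAntiOn (h.mapsTo hx) hyS hxy

theorem exists_apply_lt_iff (h : ReversesOn f S) (hf : Function.Injective f) {c : α}
    (hc : c ∉ S) :
    (∃ x ∈ S, x < c ∧ f x < f c) ↔ #{x ∈ S | f c < x} < #{x ∈ S | x < c} := by
  constructor
  · rintro ⟨e, he, hec, hfe⟩
    calc #{x ∈ S | f c < x} ≤ #{x ∈ S | f e < x} :=
          card_le_card (monotone_filter_right S fun _ _ hx => hfe.trans hx)
      _ = #{x ∈ S | x < e} := (h.card_filter_lt he).symm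
      _ < #{x ∈ S | x < c} := (card_filter_lt_lt_iff he c).2 hec
  · contrapose!
    intro hno
    refine card_le_card_of_injOn f (fun x hx => ?_) hf.injOn
    obtain ⟨hxS, hxc⟩ := mem_filter.1 hx
    exact mem_filter.2 ⟨h.mapsTo hxS,
      (hno x hxS hxc).lt_of_ne fun heq => hc (hf heq ▸ hxS)⟩

theorem card_filter_fixed (h : ReversesOn f S) : #{x ∈ S | f x = x} = #S % 2 := by
  have hle : #{x ∈ S | f x = x} ≤ 1 := card_le_one.2 fun a ha b hb => by
    obtain ⟨haS, hfa⟩ := mem_filter.1 ha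
    obtain ⟨hbS, hfb⟩ := mem_filter.1 hb
    by_contra hne
    rcases lt_or_gt_of_ne hne with hab | hba
    · exact lt_asymm hab (by simpa only [hfa, hfb] using h.strictAntiOn haS hbS hab)
    · exact lt_asymm hba (by simpa only [hfa, hfb] using h.strictAntiOn hbS haS hba)
  have heven : Even #{x ∈ S | f x ≠ x} := by
    rw [← ZMod.natCast_eq_zero_iff_even, card_eq_sum_ones, Nat.cast_sum]
    refine sum_involution (fun x _ => f x) (fun _ _ => by decide)
      (fun x hx _ => (mem_filter.1 hx).2) (fun x hx => ?_) fun x hx => ?_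
    · obtain ⟨hxS, hfx⟩ := mem_filter.1 hx
      exact mem_filter.2 ⟨h.mapsTo hxS, by rwa [h.apply_apply h hxS, ne_comm]⟩
    · exact h.apply_apply h (mem_filter.1 hx).1
  have htotal := card_filter_add_card_filter_not (s := S) (fun x => f x = x)
  obtain ⟨k, hk⟩ := heven
  simp only [ne_eq] at hk
  omega

end ReversesOn

theorem exists_perm_strictAnti (α : Type*) [LinearOrder α] [Finite α] :
    ∃ r : Equiv.Perm α, StrictAnti r := by
  have := Fintype.ofFinite α
  let e := Fintype.orderIsoFinOfCardEq α rfl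
  exact ⟨(e.symm.toEquiv.trans Fin.revPerm).trans e.toEquiv, fun x y hxy => by simpa using hxy⟩

/-- `π` reverses the order of `E` and that of its complement, preserving both sets. -/
def ReversesParts {α : Type*} [LinearOrder α] [Fintype α] (π : Equiv.Perm α) (E : Finset α) :
    Prop :=
  ReversesOn π E ∧ ReversesOn π Eᶜ

namespace ReversesParts

variable {α : Type*} [LinearOrder α] [Fintype α] {π σ : Equiv.Perm α} {E : Finset α}

theorem apply_apply (h : ReversesParts π E) (x : α) : π (π x) = x := by
  by_cases hx : x ∈ E
  · exact h.1.apply_apply h.1 hx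
  · exact h.2.apply_apply h.2 (mem_compl.2 hx)

theorem unique (hπ : ReversesParts π E) (hσ : ReversesParts σ E) : π = σ := by
  ext1 x
  by_cases hx : x ∈ E
  · exact hπ.1.eqOn hσ.1 hx
  · exact hπ.2.eqOn hσ.2 (mem_compl.2 hx)

theorem card_fixed (h : ReversesParts π E) : #{x | π x = x} = #E % 2 + #Eᶜ % 2 := by
  rw [← h.1.card_filter_fixed, ← h.2.card_filter_fixed, ← card_union_of_disjoint
    (disjoint_filter_filter disjoint_compl_right), ← filter_union, union_compl]

theorem exists_perm (E : Finset α) : ∃ π, ReversesParts π E := by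
  obtain ⟨r, hr⟩ := exists_perm_strictAnti {x // x ∈ E}
  obtain ⟨s, hs⟩ := exists_perm_strictAnti {x // x ∉ E}
  have left (x) (hx : x ∈ E) : r.subtypeCongr s x = r ⟨x, hx⟩ :=
    Equiv.Perm.subtypeCongr.left_apply r s hx
  have right (x) (hx : x ∈ Eᶜ) : r.subtypeCongr s x = s ⟨x, mem_compl.1 hx⟩ :=
    Equiv.Perm.subtypeCongr.right_apply r s (mem_compl.1 hx)
  refine ⟨r.subtypeCongr s, ⟨fun x hx => ?_, fun x hx y hy hxy => ?_⟩,
    ⟨fun x hx => ?_, fun x hx y hy hxy => ?_⟩⟩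
  · rw [left x hx]; exact (r ⟨x, hx⟩).2
  · rw [left x hx, left y hy]; exact hr (Subtype.mk_lt_mk.2 hxy)
  · rw [right x hx]; exact mem_compl.2 (s ⟨x, mem_compl.1 hx⟩).2
  · rw [right x hx, right y hy]; exact hs (Subtype.mk_lt_mk.2 hxy)

end ReversesParts

end Reversal

section LeftToRightMinima

open Finset

/-- The positions of the left-to-right minima of `π`. -/
def leftToRightMinima {α : Type*} [LinearOrder α] [Fintype α] (π : Equiv.Perm α) : Finset α :=
  {x | ∀ y < x, π x ≤ π y}

theorem ReversesParts.leftToRightMinima_eq_iff {α : Type*} [LinearOrder α] [Fintype α]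
    {π : Equiv.Perm α} {E : Finset α} (h : ReversesParts π E) :
    leftToRightMinima π = E ↔ ∀ c ∉ E, ∃ e ∈ E, e < c ∧ π e < π c := by
  constructor
  · intro hmin c hc
    have hcmin : ¬ ∀ y < c, π c ≤ π y := by simpa [← hmin, leftToRightMinima] using hc
    push Not at hcmin
    obtain ⟨y, hyc, hπ⟩ := hcmin
    refine ⟨y, ?_, hyc, hπ⟩
    by_contra hy
    exact lt_asymm hπ (h.2.strictAntiOn (by simpa using hy) (by simpa using hc) hyc)
  · intro hdom
    have hmem_of_min (x) (hx : ∀ y < x, π x ≤ π y) : x ∈ E := by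
      by_contra hxE
      obtain ⟨e, -, hex, hπ⟩ := hdom x hxE
      exact (hx e hex).not_gt hπ
    have hmin_of_mem (x) (hx : x ∈ E) (y) (hyx : y < x) : π x ≤ π y := by
      by_contra! hπ
      have hno (e) (he : e ∈ E) (hex : e < x) : ¬ π e < π x :=
        lt_asymm (h.1.strictAntiOn he hx hex)
      by_cases hy : y ∈ E
      · exact hno y hy hyx hπ
      · obtain ⟨e, he, hey, hπe⟩ := hdom y hy
        exact hno e he (hey.trans hyx) (hπe.trans hπ)
    ext x
    simpa only [leftToRightMinima, mem_filter_univ] using ⟨hmem_of_min x, hmin_of_mem x⟩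

variable {n : ℕ} {π : Equiv.Perm (Fin n)}

theorem reversesParts_leftToRightMinima (hinv : IsInvolution π) (havoid : Avoids123 π) :
    ReversesParts π (leftToRightMinima π) := by
  have hmem (x) : x ∈ leftToRightMinima π ↔ ∀ y < x, π x ≤ π y := by simp [leftToRightMinima]
  have hmaps (x) (hx : π x ∈ leftToRightMinima π) : x ∈ leftToRightMinima π := by
    refine (hmem x).2 fun y hyx => ?_
    by_contra! hlt
    exact hyx.not_ge (by simpa only [hinv _] using (hmem _).1 hx (π y) hlt)
  refine ⟨⟨fun x hx => hmaps (π x) (by rwa [hinv]), fun x _ y hy hxy => ?_⟩,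
    ⟨fun x hx => ?_, fun x hx y _ hxy => ?_⟩⟩
  · exact ((hmem y).1 hy x hxy).lt_of_ne (π.injective.ne hxy.ne')
  · exact mem_compl.2 fun hπx => mem_compl.1 hx (hmaps x hπx)
  · rw [mem_coe, mem_compl, hmem] at hx
    push Not at hx
    obtain ⟨z, hzx, hπ⟩ := hx
    have hle : π y ≤ π x := not_lt.1 fun hlt => havoid ⟨z, x, y, hzx, hxy, hπ, hlt⟩
    exact hle.lt_of_ne (π.injective.ne hxy.ne')

theorem ReversesParts.avoids123 {E : Finset (Fin n)} (h : ReversesParts π E) : Avoids123 π := by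
  rintro ⟨a, b, c, hab, hbc, hπab, hπbc⟩
  have hparts {x y} (hxy : x < y) (hπ : π x < π y) : ¬ (x ∈ E ↔ y ∈ E) := fun hiff => by
    by_cases hx : x ∈ E
    · exact lt_asymm hπ (h.1.strictAntiOn hx (hiff.1 hx) hxy)
    · exact lt_asymm hπ (h.2.strictAntiOn (mem_compl.2 hx) (mem_compl.2 (hiff.not.1 hx)) hxy)
  have := hparts hab hπab
  have := hparts hbc hπbc
  have := hparts (hab.trans hbc) (hπab.trans hπbc)
  tauto

end LeftToRightMinima

section Ballot

open Finset

variable {n : ℕ}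

/-- The ballot condition on `E` with head start `h`. Visit the positions `0, n - 1, 1, n - 2, …` of
`Fin n`, each member of `E` scoring `1` if it comes from the left end and `-1` if it comes from the
right end. The score, started at `h`, must be positive after each position from the left end.
Imposing this for all `t`, even past the middle, is harmless by `isBallot_iff_of_le_rev`. -/
def IsBallot (h : ℕ) (E : Finset (Fin n)) : Prop :=
  ∀ t : Fin n, #{x ∈ E | t.rev < x} < h + #{x ∈ E | x ≤ t}

instance (h : ℕ) : DecidablePred (IsBallot h : Finset (Fin n) → Prop) :=
  fun E => inferInstanceAs (Decidable (∀ t : Fin n, #{x ∈ E | t.rev < x} < h + #{x ∈ E | x ≤ t}))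

theorem isBallot_iff_of_le_rev {h : ℕ} {E : Finset (Fin n)} :
    IsBallot h E ↔ ∀ t ≤ t.rev, #{x ∈ E | t.rev < x} < h + #{x ∈ E | x ≤ t} := by
  refine ⟨fun hE t _ => hE t, fun hE t => ?_⟩
  obtain ht | ht := le_total t t.rev
  · exact hE t ht
  · have hrev := hE t.rev (by rwa [Fin.rev_rev])
    rw [Fin.rev_rev] at hrev
    have ht_total := card_filter_add_card_filter_not (s := E) (· ≤ t)
    have hrev_total := card_filter_add_card_filter_not (s := E) (· ≤ t.rev)
    simp only [not_le] at ht_total hrev_total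
    omega

theorem card_filter_lt_add_compl (E : Finset (Fin n)) (c : Fin n) :
    #{x ∈ E | x < c} + #{x ∈ Eᶜ | x < c} = c := by
  rw [← card_union_of_disjoint (disjoint_filter_filter disjoint_compl_right), ← filter_union,
    union_compl, filter_gt_eq_Iio, Fin.card_Iio]

theorem card_filter_gt_add_compl (E : Finset (Fin n)) (c : Fin n) :
    #{x ∈ E | c < x} + #{x ∈ Eᶜ | c < x} = n - 1 - c := by
  rw [← card_union_of_disjoint (disjoint_filter_filter disjoint_compl_right), ← filter_union,
    union_compl, filter_lt_eq_Ioi, Fin.card_Ioi]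

theorem card_filter_le_of_notMem {α : Type*} [LinearOrder α] {E : Finset α} {c : α} (hc : c ∉ E) :
    #{x ∈ E | x ≤ c} = #{x ∈ E | x < c} :=
  congrArg card (filter_congr fun _ hx => (ne_of_mem_of_not_mem hx hc).le_iff_lt)

theorem ReversesParts.exists_apply_lt_iff_ballot {π : Equiv.Perm (Fin n)} {E : Finset (Fin n)}
    (h : ReversesParts π E) {c : Fin n} (hc : c ∉ E) :
    (∃ e ∈ E, e < c ∧ π e < π c) ↔ #{x ∈ E | c.rev < x} < #{x ∈ E | x ≤ c} := by
  have hcc : c ∈ Eᶜ := mem_compl.2 hc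
  have hπc : π c ∈ Eᶜ := h.2.mapsTo hcc
  have hcompl := h.2.card_filter_lt hcc
  have hlt := card_filter_lt_add_compl E c
  have hgt := card_filter_gt_add_compl E (π c)
  have hrev := card_filter_gt_add_compl E c.rev
  have hval := Fin.val_rev c
  have habove : #{x ∈ E | π c < x} < #{x ∈ E | x < c} ↔ c.rev < π c := by
    rw [Fin.lt_def]; omega
  rw [h.1.exists_apply_lt_iff π.injective hc, habove, ← card_filter_gt_lt_iff hπc,
    card_filter_le_of_notMem hc]
  omega

-- At a step into a member of `E` the right side grows by one and the left side by at most one, so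
-- only the steps at `c ∉ E` can break the inequality.
theorem isBallot_zero_iff {E : Finset (Fin n)} :
    IsBallot 0 E ↔ ∀ c ∉ E, #{x ∈ E | c.rev < x} < #{x ∈ E | x ≤ c} := by
  refine ⟨fun hE c _ => by simpa only [zero_add] using hE c, fun hE t => ?_⟩
  rw [zero_add]
  obtain _ | n := n
  · exact t.elim0
  induction t using Fin.induction with
  | zero =>
    by_cases h0 : 0 ∈ E
    · have hempty : {x ∈ E | Fin.rev 0 < x} = ∅ := filter_false_of_mem fun x _ => by
        simpa only [Fin.rev_zero] using (Fin.le_last x).not_gt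
      rw [hempty, card_empty, card_pos]
      exact ⟨0, mem_filter.2 ⟨h0, le_rfl⟩⟩
    · exact hE 0 h0
  | succ i ih =>
    have hin := i.isLt
    by_cases hi : i.succ ∈ E
    · have htail : {x ∈ E | i.succ.rev < x} ⊆
          insert i.castSucc.rev {x ∈ E | i.castSucc.rev < x} := by
        intro x
        simp only [mem_filter, mem_insert, Fin.ext_iff, Fin.lt_def, Fin.val_rev, Fin.val_succ,
          Fin.val_castSucc]
        grind
      have hhead : {x ∈ E | x ≤ i.succ} = insert i.succ {x ∈ E | x ≤ i.castSucc} := by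
        ext x
        simp only [mem_filter, mem_insert, Fin.le_def, Fin.ext_iff, Fin.val_succ, Fin.val_castSucc]
        have heq (hx : (x : ℕ) = i + 1) : x ∈ E := (Fin.ext hx : x = i.succ) ▸ hi
        grind
      calc #{x ∈ E | i.succ.rev < x} ≤ #{x ∈ E | i.castSucc.rev < x} + 1 :=
            (card_le_card htail).trans (card_insert_le _ _)
        _ < #{x ∈ E | x ≤ i.castSucc} + 1 := Nat.add_lt_add_right ih 1
        _ = #{x ∈ E | x ≤ i.succ} := by
            rw [hhead, card_insert_of_notMem]
            simp [Fin.le_def]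
    · exact hE _ hi

theorem ReversesParts.leftToRightMinima_eq_iff_isBallot {π : Equiv.Perm (Fin n)}
    {E : Finset (Fin n)} (h : ReversesParts π E) : leftToRightMinima π = E ↔ IsBallot 0 E := by
  rw [h.leftToRightMinima_eq_iff, isBallot_zero_iff]
  exact forall₂_congr fun c hc => h.exists_apply_lt_iff_ballot hc

theorem iCount123_eq_card_isBallot (n k : ℕ) :
    iCount123 n k = Nat.card {E : Finset (Fin n) // IsBallot 0 E ∧ #E % 2 + #Eᶜ % 2 = k} := by
  have hrev (p : {π : Equiv.Perm (Fin n) // IsInvolution π ∧ Avoids123 π ∧ fixedPts π = k}) :=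
    reversesParts_leftToRightMinima p.2.1 p.2.2.1
  refine Nat.card_congr (Equiv.ofBijective (fun p => ⟨leftToRightMinima p.1,
    (hrev p).leftToRightMinima_eq_iff_isBallot.1 rfl,
    (hrev p).card_fixed.symm.trans p.2.2.2⟩) ⟨fun p q hpq => ?_, ?_⟩)
  · have hmin : leftToRightMinima p.1 = leftToRightMinima q.1 := congrArg Subtype.val hpq
    exact Subtype.ext ((hmin ▸ hrev p).unique (hrev q))
  · rintro ⟨E, hE, hcard⟩
    obtain ⟨π, hπ⟩ := ReversesParts.exists_perm E
    exact ⟨⟨π, hπ.apply_apply, hπ.avoids123, hπ.card_fixed.trans hcard⟩,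
      Subtype.ext (hπ.leftToRightMinima_eq_iff_isBallot.2 hE)⟩

end Ballot

section Counting

open Finset

variable {n : ℕ}

/-- The sum of the `k` largest binomial coefficients of the `n`-th row of Pascal's triangle. By the
reflection principle it counts the `n`-step `±1` walks starting at `k` that stay positive. -/
def centralChooseSum (n k : ℕ) : ℕ :=
  ∑ i ∈ range k, n.choose ((n + i + 1) / 2)

theorem centralChooseSum_succ_succ (n k : ℕ) :
    centralChooseSum (n + 1) (k + 1) = centralChooseSum n (k + 2) + centralChooseSum n k := by
  have hpascal (i : ℕ) : (n + 1).choose ((n + 1 + i + 1) / 2) =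
      n.choose ((n + i) / 2) + n.choose ((n + i) / 2 + 1) := by
    rw [← Nat.choose_succ_succ, show (n + 1 + i + 1) / 2 = (n + i) / 2 + 1 by omega]
  have hmiddle : n.choose (n / 2) = n.choose ((n + 1) / 2) :=
    Nat.choose_symm_of_eq_add (by omega)
  have hlower : ∑ i ∈ range (k + 1), n.choose ((n + i) / 2) =
      centralChooseSum n k + n.choose ((n + 1) / 2) := by
    rw [sum_range_succ', add_zero, hmiddle]
    rfl
  have hupper : centralChooseSum n (k + 2) =
      ∑ i ∈ range (k + 1), n.choose ((n + i) / 2 + 1) + n.choose ((n + 1) / 2) := by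
    rw [centralChooseSum, sum_range_succ', add_zero]
    congr! 3
    omega
  rw [centralChooseSum, sum_congr rfl fun i _ => hpascal i, sum_add_distrib, hlower, hupper]
  ring

theorem centralChooseSum_zero_right (n : ℕ) : centralChooseSum n 0 = 0 :=
  rfl

theorem centralChooseSum_zero_succ (k : ℕ) : centralChooseSum 0 (k + 1) = 1 := by
  rw [centralChooseSum, sum_range_succ', sum_eq_zero fun i _ => Nat.choose_eq_zero_of_lt (by omega)]
  rfl

/-- The trace of a subset of `Fin (n + 2)` on the `n` interior points, renumbered from `0`. -/
def interiorTrace (E : Finset (Fin (n + 2))) : Finset (Fin n) :=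
  {i | i.castSucc.succ ∈ E}

/-- Splits a subset of `Fin (n + 2)` into its membership at the two endpoints and its trace on
the interior points. -/
def endpointsInteriorEquiv (n : ℕ) : Finset (Fin (n + 2)) ≃ Bool × Bool × Finset (Fin n) where
  toFun E := (decide (0 ∈ E), decide (Fin.last (n + 1) ∈ E), interiorTrace E)
  invFun p := {x | (Fin.cons p.1 (Fin.snoc (fun i => decide (i ∈ p.2.2)) p.2.1 :
    Fin (n + 1) → Bool) : Fin (n + 2) → Bool) x}
  left_inv E := by
    ext x
    cases x using Fin.cases with
    | zero => simp
    | succ x => cases x using Fin.lastCases <;> simp [interiorTrace]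
  right_inv p := by
    simp [interiorTrace, ← Fin.succ_last]

theorem card_filter_fin_add_two (E : Finset (Fin (n + 2))) (p : Fin (n + 2) → Prop)
    [DecidablePred p] :
    #{x ∈ E | p x} = (decide (0 ∈ E ∧ p 0)).toNat +
      (#{i ∈ interiorTrace E | p i.castSucc.succ} +
        (decide (Fin.last (n + 1) ∈ E ∧ p (Fin.last (n + 1)))).toNat) := by
  simp only [Bool.toNat, Bool.cond_decide, interiorTrace, filter_filter]
  rw [← filter_univ_mem E, filter_filter, card_filter, card_filter, Fin.sum_univ_succ,
    Fin.sum_univ_castSucc]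
  simp

theorem ballot_at_zero_iff (h : ℕ) (E : Finset (Fin (n + 2))) :
    #{x ∈ E | Fin.rev 0 < x} < h + #{x ∈ E | x ≤ 0} ↔ 0 < h + (decide (0 ∈ E)).toNat := by
  rw [card_filter_fin_add_two, card_filter_fin_add_two]
  simp [(Fin.le_last _).not_gt]

theorem ballot_at_last_iff (h : ℕ) (E : Finset (Fin (n + 2))) :
    #{x ∈ E | (Fin.last (n + 1)).rev < x} < h + #{x ∈ E | x ≤ Fin.last (n + 1)} ↔
      0 < h + (decide (0 ∈ E)).toNat := by
  rw [card_filter_fin_add_two, card_filter_fin_add_two]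
  simp only [Fin.rev_last, lt_self_iff_false, and_false, decide_false, Bool.toNat_false,
    Fin.succ_pos, filter_true, Fin.last_pos, and_true, Fin.le_last]
  omega

theorem ballot_at_interior_iff (h : ℕ) (E : Finset (Fin (n + 2))) (i : Fin n) :
    #{x ∈ E | i.castSucc.succ.rev < x} < h + #{x ∈ E | x ≤ i.castSucc.succ} ↔
      #{x ∈ interiorTrace E | i.rev < x} + (decide (Fin.last (n + 1) ∈ E)).toNat <
        h + (decide (0 ∈ E)).toNat + #{x ∈ interiorTrace E | x ≤ i} := by
  have hrev : i.castSucc.succ.rev = i.rev.castSucc.succ := by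
    rw [Fin.rev_succ, Fin.rev_castSucc, Fin.succ_castSucc]
  have hlt_last (j : Fin n) : j.castSucc.succ < Fin.last (n + 1) := by
    rw [← Fin.succ_last, Fin.succ_lt_succ_iff]
    exact j.castSucc_lt_last
  rw [card_filter_fin_add_two, card_filter_fin_add_two, hrev]
  simp [hlt_last, (hlt_last _).not_ge, add_assoc]

theorem isBallot_add_two_iff (h : ℕ) (E : Finset (Fin (n + 2))) :
    IsBallot h E ↔ 0 < h + (decide (0 ∈ E)).toNat ∧
      IsBallot (h + (decide (0 ∈ E)).toNat - (decide (Fin.last (n + 1) ∈ E)).toNat)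
        (interiorTrace E) := by
  have hlast_le : (decide (Fin.last (n + 1) ∈ E)).toNat ≤ 1 := Bool.toNat_le _
  rw [IsBallot, Fin.forall_fin_succ, Fin.forall_fin_succ', Fin.succ_last, ballot_at_zero_iff,
    ballot_at_last_iff, and_comm (b := 0 < _), and_self_left]
  refine and_congr_right fun hpos => forall_congr' fun i => ?_
  rw [ballot_at_interior_iff]
  omega

theorem card_isBallot_add_two (n h : ℕ) :
    #{E : Finset (Fin (n + 2)) | IsBallot h E} = ∑ a : Bool, ∑ b : Bool,
      if 0 < h + a.toNat then
        #{E : Finset (Fin n) | IsBallot (h + a.toNat - b.toNat) E} else 0 := by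
  rw [card_filter, Fintype.sum_equiv (endpointsInteriorEquiv n) _
    (fun p => if 0 < h + p.1.toNat ∧ IsBallot (h + p.1.toNat - p.2.1.toNat) p.2.2 then 1 else 0)
    fun E => if_congr (isBallot_add_two_iff h E) rfl rfl]
  simp only [Fintype.sum_prod_type, ite_and, card_filter]
  congr! 4
  split_ifs <;> simp

theorem card_isBallot_one (h : ℕ) :
    #{E : Finset (Fin 1) | IsBallot h E} = centralChooseSum 1 (2 * h + 1) := by
  obtain _ | h := h
  · decide
  · have hall (E : Finset (Fin 1)) : IsBallot (h + 1) E := fun t => by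
      rw [filter_false_of_mem fun x _ => (Subsingleton.elim x t.rev).not_gt]
      exact Nat.add_pos_left h.succ_pos _
    rw [filter_true_of_mem fun E _ => hall E, mul_add_one, centralChooseSum_succ_succ,
      centralChooseSum_zero_succ, centralChooseSum_zero_succ]
    rfl

theorem card_isBallot (n h : ℕ) :
    #{E : Finset (Fin n) | IsBallot h E} = centralChooseSum n (2 * h + 1) := by
  induction n using Nat.twoStepInduction generalizing h with
  | zero => simp [IsBallot, centralChooseSum_zero_succ]
  | one => exact card_isBallot_one h
  | more n ih _ =>
    rw [card_isBallot_add_two]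
    simp only [ih, Fintype.sum_bool]
    obtain _ | h := h
    · rw [centralChooseSum_succ_succ, centralChooseSum_succ_succ]
      simp [centralChooseSum_zero_right, add_comm]
    · simp only [Bool.toNat_true, Bool.toNat_false, add_zero, Nat.succ_pos, if_true,
        Nat.add_sub_cancel_right, Nat.sub_zero, mul_add_one, centralChooseSum_succ_succ]
      ring_nf

theorem card_isBallot_zero (n : ℕ) :
    #{E : Finset (Fin n) | IsBallot 0 E} = n.choose ((n + 1) / 2) := by
  rw [card_isBallot, mul_zero, zero_add, centralChooseSum, sum_range_one, add_zero]

theorem isBallot_symmDiff_singleton_iff {c : Fin n} (hc : n = 2 * c) (h : ℕ)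
    (E : Finset (Fin n)) : IsBallot h (symmDiff E {c}) ↔ IsBallot h E := by
  have hfilter (p : Fin n → Prop) [DecidablePred p] (hp : ¬ p c) :
      {x ∈ symmDiff E {c} | p x} = ({x ∈ E | p x} : Finset (Fin n)) := by
    ext x
    simp only [mem_filter, mem_symmDiff, mem_singleton]
    grind
  rw [isBallot_iff_of_le_rev, isBallot_iff_of_le_rev]
  refine forall₂_congr fun t ht => ?_
  rw [Fin.le_def, Fin.val_rev] at ht
  rw [hfilter (t.rev < ·) (by rw [Fin.lt_def, Fin.val_rev]; omega),
    hfilter (· ≤ t) (by rw [Fin.le_def]; omega)]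

theorem odd_card_symmDiff_singleton_iff {α : Type*} [DecidableEq α] (E : Finset α) (a : α) :
    Odd #(symmDiff E {a}) ↔ ¬ Odd #E := by
  by_cases ha : a ∈ E
  · have herase : symmDiff E {a} = E.erase a := by
      ext x
      simp only [mem_symmDiff, mem_singleton, mem_erase]
      grind
    rw [herase, ← card_erase_add_one ha, Nat.odd_add_one, not_not]
  · have hinsert : symmDiff E {a} = insert a E := by
      ext x
      simp only [mem_symmDiff, mem_singleton, mem_insert]
      grind
    rw [hinsert, card_insert_of_notMem ha, Nat.odd_add_one]

theorem two_mul_card_isBallot_odd {c : Fin n} (hc : n = 2 * c) (h : ℕ) :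
    2 * #{E : Finset (Fin n) | IsBallot h E ∧ Odd #E} =
      #{E : Finset (Fin n) | IsBallot h E} := by
  have htoggle : #{E : Finset (Fin n) | IsBallot h E ∧ ¬ Odd #E} =
      #{E : Finset (Fin n) | IsBallot h E ∧ Odd #E} :=
    card_equiv (symmDiff_left_involutive {c}).toPerm fun E => by
      simp only [mem_filter_univ, Function.Involutive.coe_toPerm,
        isBallot_symmDiff_singleton_iff hc, odd_card_symmDiff_singleton_iff]
  rw [two_mul]
  nth_rewrite 2 [← htoggle]
  rw [← filter_filter, ← filter_filter, card_filter_add_card_filter_not]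

theorem mod_two_add_compl_mod_two_eq_two_iff (E : Finset (Fin n)) :
    #E % 2 + #Eᶜ % 2 = 2 ↔ Even n ∧ Odd #E := by
  have hle := card_le_univ E
  rw [Fintype.card_fin] at hle
  rw [card_compl, Fintype.card_fin, Nat.odd_iff, Nat.even_iff]
  omega

theorem iCount123_two_eq (n : ℕ) :
    iCount123 n 2 = #{E : Finset (Fin n) | IsBallot 0 E ∧ Even n ∧ Odd #E} := by
  rw [iCount123_eq_card_isBallot, Nat.card_eq_fintype_card, Fintype.card_subtype]
  simp only [mod_two_add_compl_mod_two_eq_two_iff]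

theorem two_mul_choose_pred_half (hn : Even n) (hpos : 0 < n) :
    2 * (n - 1).choose (n / 2) = n.choose (n / 2) := by
  obtain ⟨k, rfl⟩ : ∃ k, n = 2 * k + 2 := ⟨n / 2 - 1, by grind⟩
  rw [show (2 * k + 2) / 2 = k + 1 by omega, show 2 * k + 2 - 1 = 2 * k + 1 from rfl,
    Nat.choose_succ_succ (2 * k + 1), Nat.succ_eq_add_one, Nat.choose_symm_half, two_mul]

end Counting

/-- For every even `n ≥ 1`, the number of 123-avoiding involutions of `{1, …, n}` with
exactly two fixed points equals `C(n-1, n/2)`; for every odd `n ≥ 1` this number is `0`. -/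
theorem statement1 (n : ℕ) (hn : 1 ≤ n) :
    (Even n → iCount123 n 2 = (n - 1).choose (n / 2)) ∧
    (Odd n → iCount123 n 2 = 0) := by
  rw [iCount123_two_eq]
  constructor
  · intro heven
    have hmiddle : n = 2 * (n / 2) := (Nat.two_mul_div_two_of_even heven).symm
    simp only [heven, true_and]
    refine Nat.eq_of_mul_eq_mul_left two_pos ?_
    calc 2 * Finset.card {E : Finset (Fin n) | IsBallot 0 E ∧ Odd E.card}
        = Finset.card {E : Finset (Fin n) | IsBallot 0 E} :=
          two_mul_card_isBallot_odd (c := ⟨n / 2, by omega⟩) hmiddle 0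
      _ = n.choose ((n + 1) / 2) := card_isBallot_zero n
      _ = n.choose (n / 2) := by rw [show (n + 1) / 2 = n / 2 by omega]
      _ = 2 * (n - 1).choose (n / 2) := (two_mul_choose_pred_half heven hn).symm
  · intro hodd
    simp [Nat.not_even_iff_odd.2 hodd]
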